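/- Let w be a valid chipsplitting outcome of degree d ≥ 1. Then: (a) (0,0) ∈ supp⁻(w), and there exist i, j with 1 ≤ i ≤ d and 1 ≤ j ≤ d such that (i,0) ∈ supp⁺(w) and (0,j) ∈ supp⁺(w); (b) there exist distinct i, j ∈ {0, …, d} such that (i, d−i) ∈ supp⁺(w) and (j, d−j) ∈ supp⁺(w). -/

import Mathlib

/-- The splitting-move vector at a grid point `p = (i,j)`:
`δ_{(i+1,j)} + δ_{(i,j+1)} − δ_{(i,j)}`. -/
noncomputable def splitMove (p : ℕ × ℕ) : (ℕ × ℕ) →₀ ℤ :=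
  Finsupp.single (p.1 + 1, p.2) 1 + Finsupp.single (p.1, p.2 + 1) 1 - Finsupp.single p 1

/-- A chip configuration is a chipsplitting outcome if it lies in the additive subgroup
generated by all splitting-move vectors. -/
def IsOutcome (w : (ℕ × ℕ) →₀ ℤ) : Prop :=
  w ∈ AddSubgroup.closure (Set.range splitMove)

/-- A chip configuration is valid if its negative support is contained in `{(0,0)}`. -/
def IsValid (w : (ℕ × ℕ) →₀ ℤ) : Prop :=
  ∀ p : ℕ × ℕ, w p < 0 → p = (0, 0)

/-!
If `x + y = 1`, then `x ^ i * y ^ j = x ^ (i + 1) * y ^ j + x ^ i * y ^ (j + 1)`, so the sum of the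
values `w (i, j) * x ^ i * y ^ j` vanishes for every outcome `w`. For `x, y ≥ 0` the positive and
negative chips must therefore balance: `(1/2, 1/2)` sees every point, `(1, 0)` only the first axis,
`(0, 1)` only the second. In `ℤ[X]`, the choice `(X, 1 - X)` gives a polynomial identity; when `w`
has degree `d`, its coefficient at `X ^ d` is an alternating sum over the diagonal `i + j = d`, and
such a sum cannot vanish with a single nonzero term.
-/

open Finset Polynomial

/-- Pascal weights: the weights on the grid for which splitting a chip preserves total weight. They
are the linear functionals vanishing on outcomes, each given by its values at single chips. -/
def IsPascal {M : Type*} [Add M] (f : ℕ × ℕ → M) : Prop :=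
  ∀ i j, f (i + 1, j) + f (i, j + 1) = f (i, j)

theorem isPascal_pow_mul_pow {R : Type*} [CommSemiring R] {x y : R} (hxy : x + y = 1) :
    IsPascal fun p : ℕ × ℕ => x ^ p.1 * y ^ p.2 := by
  intro i j
  calc x ^ (i + 1) * y ^ j + x ^ i * y ^ (j + 1) = (x + y) * (x ^ i * y ^ j) := by ring
    _ = x ^ i * y ^ j := by rw [hxy, one_mul]

theorem coeff_X_pow_mul_one_sub_X_pow {R : Type*} [CommRing R] {i j d : ℕ} (h : i + j ≤ d) :
    ((X : R[X]) ^ i * (1 - X) ^ j).coeff d = if i + j = d then (-1) ^ j else 0 := by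
  have hdeg : (1 - X : R[X]).natDegree ≤ 1 := by compute_degree
  have hdeg_pow : ((1 - X : R[X]) ^ j).natDegree ≤ j := by
    simpa only [mul_one] using natDegree_pow_le_of_le j hdeg
  have hlead : ((1 - X : R[X]) ^ j).coeff j = (-1) ^ j := by
    simpa [coeff_one] using coeff_pow_of_natDegree_le (m := j) hdeg
  split_ifs with hd
  · rw [← hd, add_comm, coeff_X_pow_mul, hlead]
  · exact coeff_eq_zero_of_natDegree_lt <|
      (natDegree_mul_le_of_le (natDegree_X_pow_le i) hdeg_pow).trans_lt (h.lt_of_ne hd)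

namespace IsOutcome

variable {w : (ℕ × ℕ) →₀ ℤ}

theorem neg (hw : IsOutcome w) : IsOutcome (-w) :=
  AddSubgroup.neg_mem _ hw

theorem linearCombination_eq_zero {M : Type*} [AddCommGroup M] {f : ℕ × ℕ → M}
    (hw : IsOutcome w) (hf : IsPascal f) : Finsupp.linearCombination ℤ f w = 0 := by
  suffices h : AddSubgroup.closure (Set.range splitMove) ≤
      (Finsupp.linearCombination ℤ f).toAddMonoidHom.ker from h hw
  rw [AddSubgroup.closure_le]
  rintro _ ⟨⟨i, j⟩, rfl⟩
  simp [splitMove, hf i j]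

section Balance

variable {M : Type*} [AddCommGroup M] [LinearOrder M] [IsOrderedAddMonoid M] {f : ℕ × ℕ → M}
  {p : ℕ × ℕ}

theorem exists_pos_of_neg (hw : IsOutcome w) (hf : IsPascal f) (hf_nonneg : ∀ q, 0 ≤ f q)
    (hwp : w p < 0) (hfp : 0 < f p) : ∃ q, 0 < w q ∧ 0 < f q := by
  obtain ⟨q, -, hq⟩ := exists_pos_of_sum_zero_of_exists_nonzero (fun q => w q • f q)
    (hw.linearCombination_eq_zero hf)
    ⟨p, Finsupp.mem_support_iff.mpr hwp.ne, (smul_neg_of_neg_of_pos hwp hfp).ne⟩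
  exact ⟨q, pos_of_smul_pos_right hq (hf_nonneg q),
    (hf_nonneg q).lt_of_ne fun h => by simp [← h] at hq⟩

theorem exists_neg_of_pos (hw : IsOutcome w) (hf : IsPascal f) (hf_nonneg : ∀ q, 0 ≤ f q)
    (hwp : 0 < w p) (hfp : 0 < f p) : ∃ q, w q < 0 ∧ 0 < f q := by
  simpa using hw.neg.exists_pos_of_neg hf hf_nonneg (by simpa using hwp) hfp

end Balance

theorem exists_neg (hw : IsOutcome w) (hw_ne : w ≠ 0) : ∃ p, w p < 0 := by
  obtain ⟨p, hp⟩ := Finsupp.ne_iff.mp hw_ne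
  rcases lt_or_gt_of_ne hp with hneg | hpos
  · exact ⟨p, hneg⟩
  · have hhalf : (1 / 2 : ℚ) + 1 / 2 = 1 := by norm_num
    obtain ⟨q, hq, -⟩ := hw.exists_neg_of_pos (isPascal_pow_mul_pow hhalf)
      (fun q => by positivity) hpos (by positivity)
    exact ⟨q, hq⟩

theorem exists_pos_fst_axis_of_neg (hw : IsOutcome w) {i : ℕ} (hi : w (i, 0) < 0) :
    ∃ k, 0 < w (k, 0) := by
  obtain ⟨⟨k, l⟩, hpos, hl⟩ := hw.exists_pos_of_neg
    (isPascal_pow_mul_pow (add_zero (1 : ℤ))) (fun q => by positivity) hi (by simp)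
  obtain rfl : l = 0 := by
    by_contra h
    simp [h] at hl
  exact ⟨k, hpos⟩

theorem exists_pos_snd_axis_of_neg (hw : IsOutcome w) {j : ℕ} (hj : w (0, j) < 0) :
    ∃ l, 0 < w (0, l) := by
  obtain ⟨⟨k, l⟩, hpos, hk⟩ := hw.exists_pos_of_neg
    (isPascal_pow_mul_pow (zero_add (1 : ℤ))) (fun q => by positivity) hj (by simp)
  obtain rfl : k = 0 := by
    by_contra h
    simp [h] at hk
  exact ⟨l, hpos⟩

theorem alternating_sum_antidiagonal_eq_zero (hw : IsOutcome w) {d : ℕ}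
    (hdeg : ∀ p : ℕ × ℕ, w p ≠ 0 → p.1 + p.2 ≤ d) :
    ∑ p ∈ antidiagonal d, w p * (-1) ^ p.2 = 0 := by
  have hpoly := hw.linearCombination_eq_zero (isPascal_pow_mul_pow (add_sub_cancel (X : ℤ[X]) 1))
  calc ∑ p ∈ antidiagonal d, w p * (-1) ^ p.2
      = ∑ p ∈ w.support, if p.1 + p.2 = d then w p * (-1) ^ p.2 else 0 := by
        rw [← sum_filter]
        refine (sum_subset (fun p hp => ?_) fun p hp hp' => ?_).symm <;> aesop
    _ = ∑ p ∈ w.support, w p * ((X : ℤ[X]) ^ p.1 * (1 - X) ^ p.2).coeff d := by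
        refine sum_congr rfl fun p hp => ?_
        rw [coeff_X_pow_mul_one_sub_X_pow (hdeg p (Finsupp.mem_support_iff.mp hp)), mul_ite,
          mul_zero]
    _ = (Finsupp.linearCombination ℤ (fun p : ℕ × ℕ => (X : ℤ[X]) ^ p.1 * (1 - X) ^ p.2)
          w).coeff d := by
        simp only [Finsupp.linearCombination_apply, Finsupp.sum, finsetSum_coeff, coeff_smul,
          smul_eq_mul]
    _ = 0 := by rw [hpoly, coeff_zero]

theorem exists_ne_mem_antidiagonal (hw : IsOutcome w) {d : ℕ}
    (hdeg : ∀ p : ℕ × ℕ, w p ≠ 0 → p.1 + p.2 ≤ d) {p : ℕ × ℕ} (hpd : p ∈ antidiagonal d)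
    (hp : w p ≠ 0) : ∃ q ∈ antidiagonal d, q ≠ p ∧ w q ≠ 0 := by
  by_contra! hzero
  have hsum := hw.alternating_sum_antidiagonal_eq_zero hdeg
  rw [sum_eq_single_of_mem p hpd fun q hqd hqp => by rw [hzero q hqd hqp, zero_mul]] at hsum
  exact mul_ne_zero hp (pow_ne_zero _ (by decide)) hsum

end IsOutcome

namespace IsValid

variable {w : (ℕ × ℕ) →₀ ℤ}

theorem apply_zero_neg (hv : IsValid w) (hw : IsOutcome w) (hw_ne : w ≠ 0) : w (0, 0) < 0 := by
  obtain ⟨p, hp⟩ := hw.exists_neg hw_ne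
  exact hv p hp ▸ hp

theorem pos_of_ne_zero (hv : IsValid w) {p : ℕ × ℕ} (hp : w p ≠ 0) (hp_ne : p ≠ (0, 0)) :
    0 < w p :=
  (not_lt.mp fun hneg => hp_ne (hv p hneg)).lt_of_ne' hp

theorem pos_of_mem_antidiagonal (hv : IsValid w) {d : ℕ} (hd : 1 ≤ d) {p : ℕ × ℕ}
    (hpd : p ∈ antidiagonal d) (hp : w p ≠ 0) : 0 < w (p.1, d - p.1) := by
  obtain rfl : p.1 + p.2 = d := mem_antidiagonal.mp hpd
  rw [Nat.add_sub_cancel_left]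
  exact hv.pos_of_ne_zero hp fun h : p = (0, 0) => by simp [h] at hd

end IsValid

theorem stmt_5 (d : ℕ) (hd : 1 ≤ d) (w : (ℕ × ℕ) →₀ ℤ)
    (hw : IsOutcome w) (hv : IsValid w)
    (hdegle : ∀ p : ℕ × ℕ, w p ≠ 0 → p.1 + p.2 ≤ d)
    (hdegeq : ∃ p : ℕ × ℕ, w p ≠ 0 ∧ p.1 + p.2 = d) :
    (w (0, 0) < 0 ∧
      (∃ i : ℕ, 1 ≤ i ∧ i ≤ d ∧ 0 < w (i, 0)) ∧
      (∃ j : ℕ, 1 ≤ j ∧ j ≤ d ∧ 0 < w (0, j))) ∧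
    (∃ i j : ℕ, i ≤ d ∧ j ≤ d ∧ i ≠ j ∧ 0 < w (i, d - i) ∧ 0 < w (j, d - j)) := by
  obtain ⟨p, hp, hpd⟩ := hdegeq
  rw [← HasAntidiagonal.mem_antidiagonal] at hpd
  have hneg : w (0, 0) < 0 := hv.apply_zero_neg hw (Finsupp.ne_iff.mpr ⟨p, hp⟩)
  obtain ⟨i, hi⟩ := hw.exists_pos_fst_axis_of_neg hneg
  obtain ⟨j, hj⟩ := hw.exists_pos_snd_axis_of_neg hneg
  obtain ⟨q, hqd, hqp, hq⟩ := hw.exists_ne_mem_antidiagonal hdegle hpd hp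
  refine ⟨⟨hneg, ⟨i, ?_, hdegle _ hi.ne', hi⟩, ⟨j, ?_, ?_, hj⟩⟩, p.1, q.1,
    HasAntidiagonal.antidiagonal.fst_le hpd, HasAntidiagonal.antidiagonal.fst_le hqd, ?_,
    hv.pos_of_mem_antidiagonal hd hpd hp, hv.pos_of_mem_antidiagonal hd hqd hq⟩
  · exact Nat.one_le_iff_ne_zero.mpr (by rintro rfl; exact hneg.asymm hi)
  · exact Nat.one_le_iff_ne_zero.mpr (by rintro rfl; exact hneg.asymm hj)
  · simpa only [zero_add] using hdegle _ hj.ne'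
  · exact fun h => hqp (HasAntidiagonal.antidiagonal_congr hqd hpd |>.mpr h.symm)
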